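/- arXiv:1609.07531 — 2 statements merged into one kernel-verified Lean document; each statement's English description precedes it below -/
import Mathlib

section
/- Let N be a matching in G that admits a 2-level witness. Then every popular matching T in G satisfies |T(u)| ≤ |N(u)| for every vertex u ∈ A∪B; in particular |T| ≤ |N|, so N is a maximum-size popular matching in G. -/
/-!
The argument is linear-programming duality. A matching `N` with realization `N'` is represented,
vertex by vertex, by labellings of clones by their partners (`IsLabelling`). For any matching `T`,
each bijection occurring in the definition of `δ_u` comes from a labelling of the clones of `u`
that realizes `T(u)` and agrees with `N'` on `N(u) ∩ T(u)` (`exists_labelling`). Choosing an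
optimal bijection, a realization of `T` has total vote `-Δ(N,T)` against `N'`; choosing any
bijection, its total vote is at least `Δ(T,N)`.

The 2-level witness gives a dual solution (`potA`, `potB`): unmatched clones get `0`, matched
clones get `±1` according to side and level. It covers the weight of every edge and last-resort
edge of `G'_N`, and its total is `0` since the two ends of an edge of `N'` cancel; hence every
realization has total vote at most `0`, and `N` is popular. Moreover an edge `e ∉ N'` with an
end unmatched in `N'` has slack at least `1`: the edge cannot lie in `A'₁ × B'₀`, where both ends
vote `-1`, so its other end is matched with potential `1` while the weight is at most `0`. The
inequality `vote_add_newly_le` records this slack. If `T` is popular, `0 ≤ Δ(T,N)` forces the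
slack to vanish, so `T` uses only clones matched in `N'`, and `|T(u)| ≤ |N(u)|` for every `u`.
-/

/-!
Many-to-many matchings with two-sided preferences, votes, and popularity,
following "Popular Matchings in the Many-to-Many Setting".
-/

/-- The vote of a vertex with rank function `r` (smaller rank = more preferred)
comparing two options, where `none` stands for `null` (ranked below everything). -/
def vote {β : Type*} [DecidableEq β] (r : β → ℕ) : Option β → Option β → ℤ
  | none, none => 0
  | some _, none => 1
  | none, some _ => -1
  | some x, some y => if x = y then 0 else if r x < r y then 1 else -1

/-- The common length `k` of the arrays compared in `δ_u(S₀,S₁)`: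
after padding the smaller of `S₀, S₁` with nulls and removing common elements. -/
def kOf {β : Type*} [DecidableEq β] (S₀ S₁ : Finset β) : ℕ :=
  max S₀.card S₁.card - (S₀ ∩ S₁).card

/-- `S₀ ∖ S₁`, viewed as an array of `Option`s padded with `none` (null) to length `k`. -/
noncomputable def padded {β : Type*} [DecidableEq β] (S₀ S₁ : Finset β) (k : ℕ) : List (Option β) :=
  ((S₀ \ S₁).toList.map some) ++ List.replicate (k - (S₀ \ S₁).card) none

/-- `δ_u(S₀,S₁)`: the minimum, over all permutations `σ` of `{1,…,k}`, of
`Σ_i vote_u(S'₀[i], S'₁[σ(i)])`. -/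
noncomputable def deltaSet {β : Type*} [DecidableEq β] (r : β → ℕ) (S₀ S₁ : Finset β) : ℤ :=
  Finset.univ.inf' ⟨1, Finset.mem_univ 1⟩ fun σ : Equiv.Perm (Fin (kOf S₀ S₁)) =>
    ∑ i : Fin (kOf S₀ S₁),
      vote r ((padded S₀ S₁ (kOf S₀ S₁)).getD (i : ℕ) none)
             ((padded S₁ S₀ (kOf S₀ S₁)).getD (σ i : ℕ) none)

/-- A bipartite instance `G = (A ∪ B, E)` with capacities `≥ 1` and strict
preferences of every vertex over its neighbors (given by injective-on-neighbors
rank functions; smaller rank = more preferred). -/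
structure PrefInstance (α β : Type*) [Fintype α] [Fintype β] [DecidableEq α] [DecidableEq β] where
  E : Finset (α × β)
  capA : α → ℕ
  capB : β → ℕ
  rankA : α → β → ℕ
  rankB : β → α → ℕ
  capA_pos : ∀ a, 1 ≤ capA a
  capB_pos : ∀ b, 1 ≤ capB b
  rankA_injOn : ∀ a, Set.InjOn (rankA a) {b | (a, b) ∈ E}
  rankB_injOn : ∀ b, Set.InjOn (rankB b) {a | (a, b) ∈ E}

namespace PrefInstance

variable {α β : Type*} [Fintype α] [Fintype β] [DecidableEq α] [DecidableEq β]

/-- `M(a)`: the set of `B`-vertices matched to `a` in `M`. -/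
def rowSet (M : Finset (α × β)) (a : α) : Finset β :=
  Finset.univ.filter fun b => (a, b) ∈ M

/-- `M(b)`: the set of `A`-vertices matched to `b` in `M`. -/
def colSet (M : Finset (α × β)) (b : β) : Finset α :=
  Finset.univ.filter fun a => (a, b) ∈ M

variable (I : PrefInstance α β)

/-- `M` is a matching in `G`: a subset of `E` respecting all capacities. -/
def IsMatching (M : Finset (α × β)) : Prop :=
  M ⊆ I.E ∧ (∀ a, (rowSet M a).card ≤ I.capA a) ∧ (∀ b, (colSet M b).card ≤ I.capB b)

/-- `Δ_a(M₀,M₁) = δ_a(M₀(a), M₁(a))` for `a ∈ A`. -/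
noncomputable def DeltaA (M₀ M₁ : Finset (α × β)) (a : α) : ℤ :=
  deltaSet (I.rankA a) (rowSet M₀ a) (rowSet M₁ a)

/-- `Δ_b(M₀,M₁) = δ_b(M₀(b), M₁(b))` for `b ∈ B`. -/
noncomputable def DeltaB (M₀ M₁ : Finset (α × β)) (b : β) : ℤ :=
  deltaSet (I.rankB b) (colSet M₀ b) (colSet M₁ b)

/-- `Δ(M₀,M₁) = Σ_{u ∈ A∪B} Δ_u(M₀,M₁)`. -/
noncomputable def Delta (M₀ M₁ : Finset (α × β)) : ℤ :=
  (∑ a, I.DeltaA M₀ M₁ a) + ∑ b, I.DeltaB M₀ M₁ b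

/-- `M` is a popular matching: `Δ(M,T) ≥ 0` against every matching `T`. -/
def Popular (M : Finset (α × β)) : Prop :=
  I.IsMatching M ∧ ∀ T, I.IsMatching T → 0 ≤ I.Delta M T

/-- `M` is a weakly popular matching: `Δ(T,M) ≤ 0` for every matching `T`. -/
def WeaklyPopular (M : Finset (α × β)) : Prop :=
  I.IsMatching M ∧ ∀ T, I.IsMatching T → I.Delta T M ≤ 0

/-- The edge `(a,b) ∈ E ∖ M` blocks `M`. -/
def Blocks (M : Finset (α × β)) (a : α) (b : β) : Prop :=
  (a, b) ∈ I.E ∧ (a, b) ∉ M ∧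
  ((rowSet M a).card < I.capA a ∨ ∃ b' ∈ rowSet M a, I.rankA a b < I.rankA a b') ∧
  ((colSet M b).card < I.capB b ∨ ∃ a' ∈ colSet M b, I.rankB b a < I.rankB b a')

/-- `M` is a pairwise-stable matching: no edge blocks it. -/
def Stable (M : Finset (α × β)) : Prop :=
  I.IsMatching M ∧ ∀ a b, ¬ I.Blocks M a b

end PrefInstance
namespace PrefInstance

variable {α β : Type*} [Fintype α] [Fintype β] [DecidableEq α] [DecidableEq β]
variable (I : PrefInstance α β)

/-- `A'`: the set of clones `a_i`, `1 ≤ i ≤ cap(a)`, of the vertices of `A`. -/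
abbrev CloneA := (a : α) × Fin (I.capA a)

/-- `B'`: the set of clones `b_j`, `1 ≤ j ≤ cap(b)`, of the vertices of `B`. -/
abbrev CloneB := (b : β) × Fin (I.capB b)

/-- `N'` is a realization of the matching `N` on the cloned vertex sets: a
(one-to-one) matching on `A' × B'` whose projection is a bijection onto `N`. -/
def IsRealization (N : Finset (α × β)) (N' : Finset (I.CloneA × I.CloneB)) : Prop :=
  (∀ e ∈ N', ∀ f ∈ N', e.1 = f.1 → e = f) ∧
  (∀ e ∈ N', ∀ f ∈ N', e.2 = f.2 → e = f) ∧
  N'.image (fun e => (e.1.1, e.2.1)) = N ∧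
  N'.card = N.card

/-- The partner of `x ∈ A'` in a one-to-one matching `N'` on clones (`none` if unmatched,
i.e. matched to the last resort `ℓ(x)` in `N*`). -/
noncomputable def partnerA (N' : Finset (I.CloneA × I.CloneB)) (x : I.CloneA) :
    Option I.CloneB :=
  if h : ∃ y, (x, y) ∈ N' then some h.choose else none

/-- The partner of `y ∈ B'` in a one-to-one matching `N'` on clones (`none` if unmatched). -/
noncomputable def partnerB (N' : Finset (I.CloneA × I.CloneB)) (y : I.CloneB) :
    Option I.CloneA :=
  if h : ∃ x, (x, y) ∈ N' then some h.choose else none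

/-- `(x, y) ∈ A' × B'` is an edge of the graph `G'_N`: either the underlying pair is an
edge of `E ∖ N` (all clone copies present), or `(x,y)` is the unique copy in `N'` of an
edge of `N`. -/
def GNEdge (N : Finset (α × β)) (N' : Finset (I.CloneA × I.CloneB))
    (x : I.CloneA) (y : I.CloneB) : Prop :=
  ((x.1, y.1) ∈ I.E ∧ (x.1, y.1) ∉ N) ∨ (x, y) ∈ N'

/-- The weight `wt_N(x,y) = vote_a(b, N*(a_i)) + vote_b(a, N*(b_j))` of an edge of `G'_N`
lying in `A' × B'` (a last-resort partner in `N*` is read as null). -/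
noncomputable def wtE (N' : Finset (I.CloneA × I.CloneB))
    (x : I.CloneA) (y : I.CloneB) : ℤ :=
  vote (I.rankA x.1) (some y.1) (Option.map Sigma.fst (I.partnerA N' x)) +
  vote (I.rankB y.1) (some x.1) (Option.map Sigma.fst (I.partnerB N' y))

/-- A one-to-one matching on the clone sets (each clone is in at most one edge).
Together with the implicit last-resort edges for unmatched clones, this represents
an `(A' ∪ B')`-complete matching in `G'_N`. -/
def IsCloneMatching (T' : Finset (I.CloneA × I.CloneB)) : Prop :=
  (∀ e ∈ T', ∀ f ∈ T', e.1 = f.1 → e = f) ∧ (∀ e ∈ T', ∀ f ∈ T', e.2 = f.2 → e = f)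

/-- The weight `wt_N` of the `(A' ∪ B')`-complete matching represented by `T'`:
the sum of the weights of its `A' × B'` edges plus, for every clone left unmatched
in `T'` (hence matched to its last resort), the weight `wt_N(v, ℓ(v))`, which is
`-1` if `v` is matched in `N'` and `0` otherwise. -/
noncomputable def wtTotal (N' T' : Finset (I.CloneA × I.CloneB)) : ℤ :=
  (∑ e ∈ T', I.wtE N' e.1 e.2) +
  (∑ x : I.CloneA,
    if ∀ y, (x, y) ∉ T' then (if ∃ y, (x, y) ∈ N' then (-1 : ℤ) else 0) else 0) +
  (∑ y : I.CloneB,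
    if ∀ x, (x, y) ∉ T' then (if ∃ x, (x, y) ∈ N' then (-1 : ℤ) else 0) else 0)

/-- A 2-level witness for `N` (with realization `N'`): partitions
`A' = A'₀ ∪ A'₁` and `B' = B'₀ ∪ B'₁` (encoded by level functions `lA, lB`, where
`true` means level 1) such that clones of `A'` unmatched in `N'` are in `A'₁`, clones
of `B'` unmatched in `N'` are in `B'₀`, `N' ⊆ (A'₀ × B'₀) ∪ (A'₁ × B'₁)`, every edge
of `G'_N` in `A'₁ × B'₀` has weight `-2`, and every edge of `G'_N` in
`(A'₀ × B'₀) ∪ (A'₁ × B'₁)` has weight `≤ 0`. -/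
def TwoLevelWitness (N : Finset (α × β)) (N' : Finset (I.CloneA × I.CloneB))
    (lA : I.CloneA → Bool) (lB : I.CloneB → Bool) : Prop :=
  (∀ x : I.CloneA, (∀ y, (x, y) ∉ N') → lA x = true) ∧
  (∀ y : I.CloneB, (∀ x, (x, y) ∉ N') → lB y = false) ∧
  (∀ e ∈ N', lA e.1 = lB e.2) ∧
  (∀ x y, I.GNEdge N N' x y → lA x = true → lB y = false → I.wtE N' x y = -2) ∧
  (∀ x y, I.GNEdge N N' x y → lA x = lB y → I.wtE N' x y ≤ 0)

end PrefInstance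

namespace PrefInstance

/-! ### Labellings of the clones of one vertex -/

/-- The labelling `q` of the clones of one vertex by partners (`none` = unmatched) realizes the
set of partners `S`, the partner `b ∈ S` being held by the clone `cl b`. -/
def IsLabelling {C L : Type*} (q : C → Option L) (S : Finset L) (cl : L → C) : Prop :=
  ∀ c b, q c = some b ↔ b ∈ S ∧ cl b = c

lemma IsLabelling.apply {C L : Type*} {q : C → Option L} {S : Finset L} {cl : L → C}
    (h : IsLabelling q S cl) {b : L} (hb : b ∈ S) : q (cl b) = some b :=
  (h _ _).2 ⟨hb, rfl⟩

lemma IsLabelling.injOn {C L : Type*} {q : C → Option L} {S : Finset L} {cl : L → C}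
    (h : IsLabelling q S cl) : Set.InjOn cl S := by
  intro x hx y hy hxy
  have h1 := h.apply hx
  rw [hxy, h.apply hy] at h1
  exact (Option.some.inj h1).symm

/-- A sum over the clones of a vertex splits into the unmatched clones and the partners. -/
lemma IsLabelling.sum_eq {C L : Type*} [Fintype C] [DecidableEq L] {q : C → Option L}
    {S : Finset L} {cl : L → C} (h : IsLabelling q S cl) (F : C → ℤ) :
    ∑ c, F c = (∑ c with q c = none, F c) + ∑ b ∈ S, F (cl b) := by
  classical
  rw [← Finset.sum_filter_add_sum_filter_not Finset.univ (fun c => q c = none) F]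
  congr 1
  rw [← Finset.sum_image h.injOn]
  refine Finset.sum_congr ?_ fun _ _ => rfl
  ext c
  simp only [Finset.mem_filter, Finset.mem_univ, true_and, Finset.mem_image]
  constructor
  · intro hc
    obtain ⟨b, hb⟩ := Option.ne_none_iff_exists'.1 hc
    exact ⟨b, (h _ _).1 hb⟩
  · rintro ⟨b, hb, rfl⟩
    simp [h.apply hb]

lemma IsLabelling.card_unmatched {C L : Type*} [Fintype C] [DecidableEq L] {q : C → Option L}
    {S : Finset L} {cl : L → C} (h : IsLabelling q S cl) :
    (Finset.univ.filter fun c => q c = none).card + S.card = Fintype.card C := by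
  have := h.sum_eq (fun _ => 1)
  simp at this
  exact_mod_cast this.symm

/-! ### Bijections in `δ_u` as labellings -/

lemma padded_length {L : Type*} [DecidableEq L] (S T : Finset L) (k : ℕ) (hk : k = kOf S T) :
    (padded S T k).length = k := by
  have h1 := Finset.card_sdiff_add_card_inter S T
  simp only [padded, List.length_append, List.length_map, Finset.length_toList,
    List.length_replicate]
  simp only [kOf] at hk
  omega

lemma mem_padded_some {L : Type*} [DecidableEq L] {S T : Finset L} {k : ℕ} {b : L} :
    some b ∈ padded S T k ↔ b ∈ S ∧ b ∉ T := by
  simp [padded, List.mem_replicate]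

/-- The clones matched in `S` to `S ∖ T`, followed by enough unmatched clones, list the array
`padded S T k` without repetition. -/
lemma exists_clone_list {C L : Type*} [Fintype C] [DecidableEq L]
    {p : C → Option L} {S : Finset L} {cl : L → C} (hp : IsLabelling p S cl)
    (T : Finset L) (hT : T.card ≤ Fintype.card C) (k : ℕ) (hk : k = kOf S T) :
    ∃ l : List C, l.Nodup ∧ l.map p = padded S T k := by
  classical
  refine ⟨(S \ T).toList.map cl ++
    ((Finset.univ.filter fun c => p c = none).toList.take (k - (S \ T).card)), ?_, ?_⟩
  · refine List.Nodup.append ?_ ?_ ?_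
    · refine (List.nodup_map_iff_inj_on (Finset.nodup_toList _)).2 ?_
      intro x hx y hy hxy
      simp only [Finset.mem_toList, Finset.mem_sdiff] at hx hy
      exact hp.injOn hx.1 hy.1 hxy
    · exact (Finset.nodup_toList _).sublist (List.take_sublist _ _)
    · intro c hc hc'
      have h2 := List.mem_of_mem_take hc'
      simp only [List.mem_map, Finset.mem_toList, Finset.mem_sdiff, Finset.mem_filter,
        Finset.mem_univ, true_and] at hc h2
      obtain ⟨b, hb, rfl⟩ := hc
      rw [hp.apply hb.1] at h2
      cases h2
  · rw [List.map_append, padded]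
    congr 1
    · rw [List.map_map]
      refine List.map_congr_left fun b hb => ?_
      simp only [Finset.mem_toList, Finset.mem_sdiff] at hb
      exact hp.apply hb.1
    · rw [List.eq_replicate_iff]
      constructor
      · have h1 := Finset.card_sdiff_add_card_inter S T
        have h2 := hp.card_unmatched
        simp only [List.length_map, List.length_take, Finset.length_toList]
        simp only [kOf] at hk
        omega
      · intro o ho
        obtain ⟨c, hc, rfl⟩ := List.mem_map.1 ho
        have h2 := List.mem_of_mem_take hc
        simpa using h2

/-- Every bijection `σ` between the arrays of `S ∖ T` and `T ∖ S` is induced by a labelling `q`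
realizing `T` that keeps the common partners `S ∩ T` at their clones. -/
lemma exists_labelling {C L : Type*} [Fintype C] [Nonempty C] [DecidableEq L]
    {p : C → Option L} {S : Finset L} {cl : L → C} (hp : IsLabelling p S cl)
    (T : Finset L) (hT : T.card ≤ Fintype.card C) (k : ℕ) (hk : k = kOf S T)
    (f : Option L → Option L → ℤ) (hf : ∀ x, f x x = 0) (σ : Equiv.Perm (Fin k)) :
    ∃ (q : C → Option L) (cq : L → C), IsLabelling q T cq ∧
      (∀ b ∈ S, b ∈ T → cq b = cl b) ∧
      ∑ c, f (p c) (q c) = ∑ i : Fin k, f ((padded S T k).getD (i : ℕ) none)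
        ((padded T S k).getD (σ i : ℕ) none) := by
  classical
  obtain ⟨l, hnd, hl⟩ := exists_clone_list hp T hT k hk
  have hlS := padded_length S T k hk
  have hlT := padded_length T S k (by rw [hk, kOf, kOf, max_comm, Finset.inter_comm])
  have hlen : l.length = k := by rw [← hlS, ← hl, List.length_map]
  -- the clone at position `i` of the array of `S ∖ T`
  let ι : Fin k → C := fun i => l[(i : ℕ)]'(by omega)
  have hι : Function.Injective ι := by
    intro i j hij
    exact Fin.ext ((hnd.getElem_inj_iff).1 hij)
  have hpι : ∀ i, p (ι i) = (padded S T k).getD (i : ℕ) none := by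
    intro i
    have : (i : ℕ) < (l.map p).length := by simp [hlen]
    rw [← hl, List.getD_eq_getElem _ _ this, List.getElem_map]
  have hpι' : ∀ i b, p (ι i) = some b → b ∈ S ∧ b ∉ T := by
    intro i b h
    rw [← mem_padded_some (k := k), ← h, ← hl]
    exact List.mem_map_of_mem (List.getElem_mem _)
  have hrange : ∀ b ∈ S, b ∉ T → cl b ∈ Set.range ι := by
    intro b hb hbT
    have h1 : some b ∈ padded S T k := mem_padded_some.2 ⟨hb, hbT⟩
    rw [← hl] at h1
    obtain ⟨c, hc, hcb⟩ := List.mem_map.1 h1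
    obtain ⟨n, hn, rfl⟩ := List.getElem_of_mem hc
    exact ⟨⟨n, by omega⟩, (((hp _ _).1 hcb).2).symm⟩
  let g : Fin k → Option L := fun i => (padded T S k).getD (i : ℕ) none
  have hg : ∀ i b, g i = some b → b ∈ T ∧ b ∉ S := by
    intro i b h
    rw [← mem_padded_some (k := k), ← h]
    have : (i : ℕ) < (padded T S k).length := by omega
    simp only [g, List.getD_eq_getElem _ _ this]
    exact List.getElem_mem _
  have hg_ex : ∀ b, b ∈ T → b ∉ S → ∃ i, g i = some b := by
    intro b hb hbS
    have h1 : some b ∈ padded T S k := mem_padded_some.2 ⟨hb, hbS⟩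
    obtain ⟨n, hn, h⟩ := List.getElem_of_mem h1
    exact ⟨⟨n, by omega⟩, by simp only [g, List.getD_eq_getElem _ _ hn, h]⟩
  have hg_inj : ∀ i j b, g i = some b → g j = some b → i = j := by
    intro i j b hi hj
    have hT1 := Finset.nodup_toList (T \ S)
    have key : ∀ i : Fin k, g i = some b →
        ∃ h : (i : ℕ) < (T \ S).toList.length, (T \ S).toList[(i : ℕ)] = b := by
      intro i hi
      have hi' : (i : ℕ) < (padded T S k).length := by omega
      simp only [g, List.getD_eq_getElem _ _ hi'] at hi
      simp only [padded, List.getElem_append, List.length_map] at hi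
      split at hi
      · rename_i h
        refine ⟨h, ?_⟩
        simpa using hi
      · simp at hi
    obtain ⟨h1, h1'⟩ := key i hi
    obtain ⟨h2, h2'⟩ := key j hj
    exact Fin.ext ((hT1.getElem_inj_iff).1 (h1'.trans h2'.symm))
  let q : C → Option L := fun c => if h : ∃ i, ι i = c then g (σ h.choose) else p c
  have hqι : ∀ i, q (ι i) = g (σ i) := by
    intro i
    have h : ∃ j, ι j = ι i := ⟨i, rfl⟩
    simp only [q, dif_pos h]
    rw [hι h.choose_spec]
  have hqn : ∀ c, c ∉ Set.range ι → q c = p c := by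
    intro c hc
    simp only [q]
    rw [dif_neg]
    exact hc
  have hcq : ∀ b, ∃ c, b ∈ T → (q c = some b ∧ (b ∈ S → c = cl b)) := by
    intro b
    by_cases hb : b ∈ T
    · by_cases hbS : b ∈ S
      · refine ⟨cl b, fun _ => ⟨?_, fun _ => rfl⟩⟩
        rw [hqn, hp.apply hbS]
        rintro ⟨i, hi⟩
        exact (hpι' i b (by rw [hi, hp.apply hbS])).2 hb
      · obtain ⟨i, hi⟩ := hg_ex b hb hbS
        refine ⟨ι (σ.symm i), fun _ => ⟨?_, fun h => absurd h hbS⟩⟩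
        rw [hqι, Equiv.apply_symm_apply, hi]
    · exact ⟨Classical.arbitrary C, fun h => absurd h hb⟩
  choose cq hcq using hcq
  have hq_mem : ∀ c b, q c = some b → b ∈ T := by
    intro c b h
    by_cases hc : c ∈ Set.range ι
    · obtain ⟨i, rfl⟩ := hc
      rw [hqι] at h
      exact (hg _ _ h).1
    · rw [hqn c hc] at h
      by_contra hb
      obtain ⟨h1, rfl⟩ := (hp _ _).1 h
      exact hc (hrange b h1 hb)
  have hq_inj : ∀ c c' b, q c = some b → q c' = some b → c = c' := by
    intro c c' b h h'
    by_cases hc : c ∈ Set.range ι <;> by_cases hc' : c' ∈ Set.range ι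
    · obtain ⟨i, rfl⟩ := hc
      obtain ⟨j, rfl⟩ := hc'
      rw [hqι] at h h'
      rw [σ.injective (hg_inj _ _ _ h h')]
    · obtain ⟨i, rfl⟩ := hc
      rw [hqι] at h
      rw [hqn _ hc'] at h'
      exact absurd ((hp _ _).1 h').1 (hg _ _ h).2
    · obtain ⟨i, rfl⟩ := hc'
      rw [hqι] at h'
      rw [hqn _ hc] at h
      exact absurd ((hp _ _).1 h).1 (hg _ _ h').2
    · rw [hqn _ hc] at h
      rw [hqn _ hc'] at h'
      exact ((hp _ _).1 h).2.symm.trans ((hp _ _).1 h').2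
  refine ⟨q, cq, ?_, ?_, ?_⟩
  · intro c b
    constructor
    · intro h
      have hb := hq_mem c b h
      exact ⟨hb, hq_inj _ _ b (hcq b hb).1 h⟩
    · rintro ⟨hb, rfl⟩
      exact (hcq b hb).1
  · intro b hS hb
    exact (hcq b hb).2 hS
  · have h1 : ∑ c, f (p c) (q c) = ∑ c ∈ Finset.univ.image ι, f (p c) (q c) := by
      refine (Finset.sum_subset (Finset.subset_univ _) ?_).symm
      intro c _ hc
      rw [hqn c (by simpa using hc), hf]
    rw [h1, Finset.sum_image hι.injOn]
    refine Finset.sum_congr rfl fun i _ => ?_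
    rw [hqι, hpι]

lemma vote_self {L : Type*} [DecidableEq L] (r : L → ℕ) (x : Option L) : vote r x x = 0 := by
  cases x <;> simp [vote]

lemma vote_neg {L : Type*} [DecidableEq L] (r : L → ℕ) (x y : Option L)
    (h : ∀ b c, x = some b → y = some c → r b = r c → b = c) :
    vote r x y = - vote r y x := by
  cases x with
  | none => cases y <;> simp [vote]
  | some b =>
    cases y with
    | none => simp [vote]
    | some c =>
      have := h b c rfl rfl
      simp only [vote]
      grind

/-- Some labelling realizing `T` has total vote exactly `-δ(S,T)` against `p`; this uses that `r` is
injective, which makes votes antisymmetric. -/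
lemma exists_labelling_eq {C L : Type*} [Fintype C] [Nonempty C] [DecidableEq L]
    {p : C → Option L} {S : Finset L} {cl : L → C} (hp : IsLabelling p S cl)
    (T : Finset L) (hT : T.card ≤ Fintype.card C) (r : L → ℕ) (E : Set L)
    (hr : Set.InjOn r E) (hSE : ∀ b ∈ S, b ∈ E) (hTE : ∀ b ∈ T, b ∈ E) :
    ∃ (q : C → Option L) (cq : L → C), IsLabelling q T cq ∧
      (∀ b ∈ S, b ∈ T → cq b = cl b) ∧
      ∑ c, vote r (q c) (p c) = - deltaSet r S T := by
  obtain ⟨σ, -, hσ⟩ := Finset.exists_mem_eq_inf' (s := Finset.univ) ⟨1, Finset.mem_univ 1⟩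
    (fun σ : Equiv.Perm (Fin (kOf S T)) => ∑ i : Fin (kOf S T),
      vote r ((padded S T (kOf S T)).getD (i : ℕ) none)
             ((padded T S (kOf S T)).getD (σ i : ℕ) none))
  obtain ⟨q, cq, hq, hc, hs⟩ := exists_labelling hp T hT _ rfl (vote r) (vote_self r) σ
  refine ⟨q, cq, hq, hc, ?_⟩
  rw [deltaSet, hσ, ← hs, ← Finset.sum_neg_distrib]
  refine Finset.sum_congr rfl fun c _ => vote_neg _ _ _ ?_
  intro x y hx hy hxy
  exact hr (hTE _ ((hq _ _).1 hx).1) (hSE _ ((hp _ _).1 hy).1) hxy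

/-- Some labelling realizing `T` has total vote at least `δ(T,S)` against `p`. -/
lemma exists_labelling_ge {C L : Type*} [Fintype C] [Nonempty C] [DecidableEq L]
    {p : C → Option L} {S : Finset L} {cl : L → C} (hp : IsLabelling p S cl)
    (T : Finset L) (hT : T.card ≤ Fintype.card C) (r : L → ℕ) :
    ∃ (q : C → Option L) (cq : L → C), IsLabelling q T cq ∧
      (∀ b ∈ S, b ∈ T → cq b = cl b) ∧
      deltaSet r T S ≤ ∑ c, vote r (q c) (p c) := by
  have hk : kOf T S = kOf S T := by rw [kOf, kOf, max_comm, Finset.inter_comm]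
  obtain ⟨q, cq, hq, hc, hs⟩ := exists_labelling hp T hT (kOf T S) hk
    (fun x y => vote r y x) (vote_self r) 1
  refine ⟨q, cq, hq, hc, ?_⟩
  rw [hs]
  exact Finset.inf'_le _ (Finset.mem_univ (1 : Equiv.Perm (Fin (kOf T S))))

lemma IsLabelling.card_le {C L : Type*} {p q : C → Option L}
    {S T : Finset L} {cp cq : L → C} (hp : IsLabelling p S cp) (hq : IsLabelling q T cq)
    (h : ∀ c, p c = none → q c = none) : T.card ≤ S.card := by
  classical
  calc T.card = (T.image cq).card := (Finset.card_image_of_injOn hq.injOn).symm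
    _ ≤ (S.image cp).card := by
        refine Finset.card_le_card fun c hc => ?_
        obtain ⟨b, hb, rfl⟩ := Finset.mem_image.1 hc
        have h1 : p (cq b) ≠ none := fun h0 => by simpa [hq.apply hb] using h _ h0
        obtain ⟨b', hb'⟩ := Option.ne_none_iff_exists'.1 h1
        exact Finset.mem_image.2 ⟨b', (hp _ _).1 hb'⟩
    _ ≤ S.card := Finset.card_image_le

variable {α β : Type*} [Fintype α] [Fintype β] [DecidableEq α] [DecidableEq β]

/-- A function on the clones has nonpositive sum if it is nonpositive on the clones unmatched in a
realization of `M` and its values at the two ends of each edge of `M` have nonpositive sum. -/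
lemma sum_clones_le {cA : α → ℕ} {cB : β → ℕ} {M : Finset (α × β)}
    {qA : ∀ a, Fin (cA a) → Option β} {qB : ∀ b, Fin (cB b) → Option α}
    {kA : ∀ a, β → Fin (cA a)} {kB : ∀ b, α → Fin (cB b)}
    (hA : ∀ a, IsLabelling (qA a) (rowSet M a) (kA a))
    (hB : ∀ b, IsLabelling (qB b) (colSet M b) (kB b))
    (F : ∀ a, Fin (cA a) → ℤ) (G : ∀ b, Fin (cB b) → ℤ)
    (hF : ∀ a i, qA a i = none → F a i ≤ 0) (hG : ∀ b j, qB b j = none → G b j ≤ 0)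
    (hFG : ∀ a b, (a, b) ∈ M → F a (kA a b) + G b (kB b a) ≤ 0) :
    ∑ a, ∑ i, F a i + ∑ b, ∑ j, G b j ≤ 0 := by
  have h1 : ∑ a, ∑ i, F a i ≤ ∑ a, ∑ b ∈ rowSet M a, F a (kA a b) := by
    refine Finset.sum_le_sum fun a _ => ?_
    rw [(hA a).sum_eq]
    have : (∑ i with qA a i = none, F a i) ≤ 0 :=
      Finset.sum_nonpos fun i hi => hF a i (Finset.mem_filter.1 hi).2
    linarith
  have h2 : ∑ b, ∑ j, G b j ≤ ∑ b, ∑ a ∈ colSet M b, G b (kB b a) := by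
    refine Finset.sum_le_sum fun b _ => ?_
    rw [(hB b).sum_eq]
    have : (∑ j with qB b j = none, G b j) ≤ 0 :=
      Finset.sum_nonpos fun j hj => hG b j (Finset.mem_filter.1 hj).2
    linarith
  have h3 : ∑ b, ∑ a ∈ colSet M b, G b (kB b a) = ∑ a, ∑ b ∈ rowSet M a, G b (kB b a) :=
    Finset.sum_comm' (by intro x y; simp [rowSet, colSet])
  have h4 : ∑ a, ∑ b ∈ rowSet M a, F a (kA a b) + ∑ a, ∑ b ∈ rowSet M a, G b (kB b a) ≤ 0 := by
    rw [← Finset.sum_add_distrib]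
    refine Finset.sum_nonpos fun a _ => ?_
    rw [← Finset.sum_add_distrib]
    exact Finset.sum_nonpos fun b hb => hFG a b (by simpa [rowSet] using hb)
  linarith

/-! ### The labellings given by `N'` -/

variable (I : PrefInstance α β)

/-- The underlying `B`-vertex of the partner of the clone `a_i` in `N'`. -/
noncomputable def labA (N' : Finset (I.CloneA × I.CloneB)) (a : α) (i : Fin (I.capA a)) :
    Option β :=
  Option.map Sigma.fst (I.partnerA N' ⟨a, i⟩)

/-- The underlying `A`-vertex of the partner of the clone `b_j` in `N'`. -/
noncomputable def labB (N' : Finset (I.CloneA × I.CloneB)) (b : β) (j : Fin (I.capB b)) :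
    Option α :=
  Option.map Sigma.fst (I.partnerB N' ⟨b, j⟩)

/-- A realization `N'` of `N` labels the clones on both sides consistently. -/
lemma IsRealization.exists_labelling {N : Finset (α × β)} {N' : Finset (I.CloneA × I.CloneB)}
    (h : I.IsRealization N N') :
    ∃ (kA : ∀ a, β → Fin (I.capA a)) (kB : ∀ b, α → Fin (I.capB b)),
      (∀ a, IsLabelling (I.labA N' a) (rowSet N a) (kA a)) ∧
      (∀ b, IsLabelling (I.labB N' b) (colSet N b) (kB b)) ∧
      (∀ a b, (a, b) ∈ N → ((⟨a, kA a b⟩, ⟨b, kB b a⟩) : I.CloneA × I.CloneB) ∈ N') := by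
  obtain ⟨h1, h2, h3, h4⟩ := h
  have hinj : Set.InjOn (fun e : I.CloneA × I.CloneB => (e.1.1, e.2.1)) N' := by
    rw [← Finset.card_image_iff, h3, h4]
  have hex : ∀ a b, ∃ (i : Fin (I.capA a)) (j : Fin (I.capB b)), (a, b) ∈ N →
      ((⟨a, i⟩, ⟨b, j⟩) : I.CloneA × I.CloneB) ∈ N' := by
    intro a b
    by_cases hab : (a, b) ∈ N
    · have hab' := hab
      rw [← h3, Finset.mem_image] at hab'
      obtain ⟨⟨⟨a', i⟩, ⟨b', j⟩⟩, he, heq⟩ := hab'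
      simp only [Prod.mk.injEq] at heq
      obtain ⟨rfl, rfl⟩ := heq
      exact ⟨i, j, fun _ => he⟩
    · exact ⟨⟨0, I.capA_pos a⟩, ⟨0, I.capB_pos b⟩, fun h => absurd h hab⟩
  choose kA kB hk using hex
  have hproj : ∀ a i b j, ((⟨a, i⟩, ⟨b, j⟩) : I.CloneA × I.CloneB) ∈ N' →
      (a, b) ∈ N ∧ kA a b = i ∧ kB a b = j := by
    intro a i b j he
    have hab : (a, b) ∈ N := by
      rw [← h3]
      exact Finset.mem_image_of_mem (fun e : I.CloneA × I.CloneB => (e.1.1, e.2.1)) he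
    have := hinj (hk a b hab) he rfl
    simp only [Prod.mk.injEq, Sigma.mk.injEq, heq_eq_eq, true_and] at this
    exact ⟨hab, this⟩
  refine ⟨kA, fun b a => kB a b, ?_, ?_, hk⟩
  · intro a i b
    have hmem : b ∈ rowSet N a ↔ (a, b) ∈ N := by simp [rowSet]
    rw [hmem, labA, partnerA]
    constructor
    · intro h
      split at h
      · rename_i hex
        have hs := hex.choose_spec
        simp only [Option.map_some, Option.some.injEq] at h
        generalize hex.choose = y at hs h
        obtain ⟨b', j⟩ := y
        subst h
        exact ⟨(hproj _ _ _ _ hs).1, (hproj _ _ _ _ hs).2.1⟩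
      · simp at h
    · rintro ⟨hab, rfl⟩
      have hex : ∃ y : I.CloneB, ((⟨a, kA a b⟩, y) : I.CloneA × I.CloneB) ∈ N' :=
        ⟨_, hk a b hab⟩
      rw [dif_pos hex]
      have := h1 _ hex.choose_spec _ (hk a b hab) rfl
      simp only [Prod.mk.injEq, true_and] at this
      rw [this]
      rfl
  · intro b j a
    have hmem : a ∈ colSet N b ↔ (a, b) ∈ N := by simp [colSet]
    rw [hmem, labB, partnerB]
    constructor
    · intro h
      split at h
      · rename_i hex
        have hs := hex.choose_spec
        simp only [Option.map_some, Option.some.injEq] at h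
        generalize hex.choose = x at hs h
        obtain ⟨a', i⟩ := x
        subst h
        exact ⟨(hproj _ _ _ _ hs).1, (hproj _ _ _ _ hs).2.2⟩
      · simp at h
    · rintro ⟨hab, rfl⟩
      have hex : ∃ x : I.CloneA, ((x, ⟨b, kB a b⟩) : I.CloneA × I.CloneB) ∈ N' :=
        ⟨_, hk a b hab⟩
      rw [dif_pos hex]
      have := h2 _ hex.choose_spec _ (hk a b hab) rfl
      simp only [Prod.mk.injEq, and_true] at this
      rw [this]
      rfl

lemma labA_eq_none {N' : Finset (I.CloneA × I.CloneB)} {a : α} {i : Fin (I.capA a)}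
    (h : I.labA N' a i = none) : ∀ y, ((⟨a, i⟩, y) : I.CloneA × I.CloneB) ∉ N' := by
  intro y hy
  have hex : ∃ y : I.CloneB, ((⟨a, i⟩, y) : I.CloneA × I.CloneB) ∈ N' := ⟨y, hy⟩
  rw [labA, partnerA, dif_pos hex] at h
  simp at h

lemma labB_eq_none {N' : Finset (I.CloneA × I.CloneB)} {b : β} {j : Fin (I.capB b)}
    (h : I.labB N' b j = none) : ∀ x, ((x, ⟨b, j⟩) : I.CloneA × I.CloneB) ∉ N' := by
  intro x hx
  have hex : ∃ x : I.CloneA, ((x, ⟨b, j⟩) : I.CloneA × I.CloneB) ∈ N' := ⟨x, hx⟩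
  rw [labB, partnerB, dif_pos hex] at h
  simp at h

/-! ### The dual solution and its slack -/

lemma vote_none_left {L : Type*} [DecidableEq L] (r : L → ℕ) (y : Option L) :
    vote r none y = if y = none then 0 else -1 := by
  cases y <;> simp [vote]

lemma vote_bounds {L : Type*} [DecidableEq L] (r : L → ℕ) (x y : Option L) :
    -1 ≤ vote r x y ∧ vote r x y ≤ 1 := by
  cases x <;> cases y <;> simp only [vote] <;> grind

/-- The dual potential of a clone of `A`: `0` if unmatched, else `1` on level 0, `-1` on level 1. -/
noncomputable def potA (N' : Finset (I.CloneA × I.CloneB)) (lA : I.CloneA → Bool)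
    (a : α) (i : Fin (I.capA a)) : ℤ :=
  if I.labA N' a i = none then 0 else if lA ⟨a, i⟩ = true then -1 else 1

/-- The dual potential of a clone of `B`: `0` if unmatched, else `-1` on level 0, `1` on level 1. -/
noncomputable def potB (N' : Finset (I.CloneA × I.CloneB)) (lB : I.CloneB → Bool)
    (b : β) (j : Fin (I.capB b)) : ℤ :=
  if I.labB N' b j = none then 0 else if lB ⟨b, j⟩ = true then 1 else -1

/-- `1` for a clone that is unmatched in the labelling `p` but matched in `q`, else `0`. -/
def newly {L : Type*} [DecidableEq L] (p q : Option L) : ℤ :=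
  if p = none ∧ q ≠ none then 1 else 0

lemma newly_nonneg {L : Type*} [DecidableEq L] (p q : Option L) : 0 ≤ newly p q := by
  unfold newly; split <;> simp

/-- Case check behind the slack of an edge outside `N`: `P`, `Q` say that its ends in `A'`, `B'`
are unmatched in `N'`, `x`, `y` are the votes of the ends and `l`, `m` their levels. -/
lemma edge_slack (P Q : Prop) [Decidable P] [Decidable Q] (x y : ℤ) (l m : Bool)
    (hx : -1 ≤ x ∧ x ≤ 1) (hy : -1 ≤ y ∧ y ≤ 1) (hPx : P → x = 1) (hQy : Q → y = 1)
    (hP : P → l = true) (hQ : Q → m = false)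
    (h10 : l = true → m = false → x + y = -2) (heq : l = m → x + y ≤ 0) :
    x - (if P then 0 else if l = true then -1 else 1) + (if P then 1 else 0) +
      (y - (if Q then 0 else if m = true then 1 else -1) + (if Q then 1 else 0)) ≤ 0 := by
  by_cases z1 : P <;> by_cases z2 : Q <;> cases l <;> cases m <;> simp_all <;> omega

/-- Weak duality with slack: the vote of a realization of `T` against `N'`, plus the number of
clones it matches that `N'` leaves unmatched, is at most `0`. -/
lemma vote_add_newly_le {N : Finset (α × β)} {N' : Finset (I.CloneA × I.CloneB)}
    {lA : I.CloneA → Bool} {lB : I.CloneB → Bool} (hW : I.TwoLevelWitness N N' lA lB)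
    {kA : ∀ a, β → Fin (I.capA a)} {kB : ∀ b, α → Fin (I.capB b)}
    (hA : ∀ a, IsLabelling (I.labA N' a) (rowSet N a) (kA a))
    (hB : ∀ b, IsLabelling (I.labB N' b) (colSet N b) (kB b))
    (hk : ∀ a b, (a, b) ∈ N → ((⟨a, kA a b⟩, ⟨b, kB b a⟩) : I.CloneA × I.CloneB) ∈ N')
    {T : Finset (α × β)} (hT : T ⊆ I.E)
    {qA : ∀ a, Fin (I.capA a) → Option β} {qB : ∀ b, Fin (I.capB b) → Option α}
    {mA : ∀ a, β → Fin (I.capA a)} {mB : ∀ b, α → Fin (I.capB b)}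
    (hqA : ∀ a, IsLabelling (qA a) (rowSet T a) (mA a))
    (hqB : ∀ b, IsLabelling (qB b) (colSet T b) (mB b))
    (hmA : ∀ a, ∀ b ∈ rowSet N a, b ∈ rowSet T a → mA a b = kA a b)
    (hmB : ∀ b, ∀ a ∈ colSet N b, a ∈ colSet T b → mB b a = kB b a) :
    (∑ a, ∑ i, vote (I.rankA a) (qA a i) (I.labA N' a i)) +
      (∑ b, ∑ j, vote (I.rankB b) (qB b j) (I.labB N' b j)) +
      ((∑ a, ∑ i, newly (I.labA N' a i) (qA a i)) +
      ∑ b, ∑ j, newly (I.labB N' b j) (qB b j)) ≤ 0 := by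
  obtain ⟨w1, w2, w3, w4, w5⟩ := hW
  -- the potentials of the two endpoints of an edge of `N'` cancel
  have hedge : ∀ a b, (a, b) ∈ N →
      I.potA N' lA a (kA a b) + I.potB N' lB b (kB b a) = 0 := by
    intro a b hab
    have e1 := (hA a).apply (b := b) (by simpa [rowSet] using hab)
    have e2 := (hB b).apply (b := a) (by simpa [colSet] using hab)
    have e3 := w3 _ (hk a b hab)
    simp only [] at e3
    simp only [potA, potB, e1, e2, e3]
    cases lB ⟨b, kB b a⟩ <;> simp
  have hpot : (∑ a, ∑ i, I.potA N' lA a i) + ∑ b, ∑ j, I.potB N' lB b j ≤ 0 := by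
    refine sum_clones_le hA hB _ _ ?_ ?_ fun a b hab => (hedge a b hab).le
    · intro a i h; simp [potA, h]
    · intro b j h; simp [potB, h]
  have hmain := sum_clones_le hqA hqB
    (fun a i => vote (I.rankA a) (qA a i) (I.labA N' a i) - I.potA N' lA a i +
      newly (I.labA N' a i) (qA a i))
    (fun b j => vote (I.rankB b) (qB b j) (I.labB N' b j) - I.potB N' lB b j +
      newly (I.labB N' b j) (qB b j)) ?_ ?_ ?_
  · simp only [Finset.sum_add_distrib, Finset.sum_sub_distrib] at hmain
    linarith
  · intro a i h
    simp only [h, vote_none_left, potA, newly]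
    grind
  · intro b j h
    simp only [h, vote_none_left, potB, newly]
    grind
  · intro a b hab
    have hr : b ∈ rowSet T a := by simpa [rowSet] using hab
    have hc : a ∈ colSet T b := by simpa [colSet] using hab
    have e1 := (hqA a).apply hr
    have e2 := (hqB b).apply hc
    by_cases hN : (a, b) ∈ N
    · have hr' : b ∈ rowSet N a := by simpa [rowSet] using hN
      have hc' : a ∈ colSet N b := by simpa [colSet] using hN
      have e3 := (hA a).apply hr'
      have e4 := (hB b).apply hc'
      have e5 := hedge a b hN
      rw [hmA a b hr' hr] at e1 ⊢
      rw [hmB b a hc' hc] at e2 ⊢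
      simp only [e1, e2, e3, e4, vote_self, newly]
      simp
      linarith
    · have hG : I.GNEdge N N' ⟨a, mA a b⟩ ⟨b, mB b a⟩ := Or.inl ⟨hT hab, hN⟩
      have u1 := w1 ⟨a, mA a b⟩
      have u2 := w2 ⟨b, mB b a⟩
      have u4 := w4 _ _ hG
      have u5 := w5 _ _ hG
      have n1 := I.labA_eq_none (N' := N') (a := a) (i := mA a b)
      have n2 := I.labB_eq_none (N' := N') (b := b) (j := mB b a)
      have hwt : I.wtE N' ⟨a, mA a b⟩ ⟨b, mB b a⟩ =
          vote (I.rankA a) (some b) (I.labA N' a (mA a b)) +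
          vote (I.rankB b) (some a) (I.labB N' b (mB b a)) := rfl
      rw [hwt] at u4 u5
      have b1 := vote_bounds (I.rankA a) (some b) (I.labA N' a (mA a b))
      have b2 := vote_bounds (I.rankB b) (some a) (I.labB N' b (mB b a))
      simp only [e1, e2, potA, potB, newly]
      have v1 : I.labA N' a (mA a b) = none →
          vote (I.rankA a) (some b) (I.labA N' a (mA a b)) = 1 := by
        intro h; rw [h]; rfl
      have v2 : I.labB N' b (mB b a) = none →
          vote (I.rankB b) (some a) (I.labB N' b (mB b a)) = 1 := by
        intro h; rw [h]; rfl
      have := edge_slack _ _ _ _ _ _ b1 b2 v1 v2 (fun h => u1 (n1 h)) (fun h => u2 (n2 h)) u4 u5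
      simpa using this

lemma card_eq_sum_rowSet (M : Finset (α × β)) : M.card = ∑ a, (rowSet M a).card := by
  rw [Finset.card_eq_sum_card_fiberwise (f := Prod.fst) (t := Finset.univ) (by simp)]
  refine Finset.sum_congr rfl fun a _ => ?_
  refine Finset.card_bij' (fun e _ => e.2) (fun b _ => (a, b)) ?_ ?_ ?_ ?_
  · rintro ⟨a', b⟩ h
    simp only [Finset.mem_filter] at h
    obtain ⟨h1, rfl⟩ := h
    simpa [rowSet] using h1
  · intro b h
    simpa [rowSet] using h
  · rintro ⟨a', b⟩ h
    simp only [Finset.mem_filter] at h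
    simp [h.2]
  · simp

end PrefInstance

/-- Let `N` be a matching in `G` (with realization `N'`) that admits a
2-level witness. Then every popular matching `T` in `G` satisfies `|T(u)| ≤ |N(u)|` for
every vertex `u ∈ A ∪ B`; in particular `|T| ≤ |N|`, so `N` is a maximum-size popular
matching in `G`. -/
theorem statement8 {α β : Type*} [Fintype α] [Fintype β] [DecidableEq α] [DecidableEq β]
    (I : PrefInstance α β) (N : Finset (α × β)) (hN : I.IsMatching N)
    (N' : Finset (I.CloneA × I.CloneB)) (hN' : I.IsRealization N N')
    (lA : I.CloneA → Bool) (lB : I.CloneB → Bool)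
    (hW : I.TwoLevelWitness N N' lA lB) :
    I.Popular N ∧
    ∀ T : Finset (α × β), I.Popular T →
      (∀ a : α, (PrefInstance.rowSet T a).card ≤ (PrefInstance.rowSet N a).card) ∧
      (∀ b : β, (PrefInstance.colSet T b).card ≤ (PrefInstance.colSet N b).card) ∧
      T.card ≤ N.card := by
  classical
  obtain ⟨kA, kB, hA, hB, hk⟩ := PrefInstance.IsRealization.exists_labelling I hN'
  have neA : ∀ a, Nonempty (Fin (I.capA a)) := fun a => ⟨⟨0, I.capA_pos a⟩⟩
  have neB : ∀ b, Nonempty (Fin (I.capB b)) := fun b => ⟨⟨0, I.capB_pos b⟩⟩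
  have rowE : ∀ M, I.IsMatching M → ∀ a, ∀ b ∈ PrefInstance.rowSet M a, (a, b) ∈ I.E :=
    fun M hM a b hb => hM.1 (by simpa [PrefInstance.rowSet] using hb)
  have colE : ∀ M, I.IsMatching M → ∀ b, ∀ a ∈ PrefInstance.colSet M b, (a, b) ∈ I.E :=
    fun M hM b a hb => hM.1 (by simpa [PrefInstance.colSet] using hb)
  refine ⟨⟨hN, ?_⟩, ?_⟩
  · intro T hT
    choose qA mA hqA hmA hsA using fun a => PrefInstance.exists_labelling_eq (hA a)
      (PrefInstance.rowSet T a) (by simpa using hT.2.1 a) (I.rankA a) _ (I.rankA_injOn a)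
      (rowE N hN a) (rowE T hT a)
    choose qB mB hqB hmB hsB using fun b => PrefInstance.exists_labelling_eq (hB b)
      (PrefInstance.colSet T b) (by simpa using hT.2.2 b) (I.rankB b) _ (I.rankB_injOn b)
      (colE N hN b) (colE T hT b)
    have key := I.vote_add_newly_le hW hA hB hk hT.1 hqA hqB hmA hmB
    have p1 : 0 ≤ ∑ a, ∑ i, PrefInstance.newly (I.labA N' a i) (qA a i) :=
      Finset.sum_nonneg fun _ _ => Finset.sum_nonneg fun _ _ => PrefInstance.newly_nonneg _ _
    have p2 : 0 ≤ ∑ b, ∑ j, PrefInstance.newly (I.labB N' b j) (qB b j) :=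
      Finset.sum_nonneg fun _ _ => Finset.sum_nonneg fun _ _ => PrefInstance.newly_nonneg _ _
    simp only [hsA, hsB, Finset.sum_neg_distrib] at key
    simp only [PrefInstance.Delta, PrefInstance.DeltaA, PrefInstance.DeltaB]
    linarith
  · intro T hTp
    have hT := hTp.1
    choose qA mA hqA hmA hsA using fun a => PrefInstance.exists_labelling_ge (hA a)
      (PrefInstance.rowSet T a) (by simpa using hT.2.1 a) (I.rankA a)
    choose qB mB hqB hmB hsB using fun b => PrefInstance.exists_labelling_ge (hB b)
      (PrefInstance.colSet T b) (by simpa using hT.2.2 b) (I.rankB b)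
    have key := I.vote_add_newly_le hW hA hB hk hT.1 hqA hqB hmA hmB
    have hD := hTp.2 N hN
    simp only [PrefInstance.Delta, PrefInstance.DeltaA, PrefInstance.DeltaB] at hD
    have s1 := Finset.sum_le_sum fun a (_ : a ∈ Finset.univ) => hsA a
    have s2 := Finset.sum_le_sum fun b (_ : b ∈ Finset.univ) => hsB b
    have p1 : 0 ≤ ∑ a, ∑ i, PrefInstance.newly (I.labA N' a i) (qA a i) :=
      Finset.sum_nonneg fun _ _ => Finset.sum_nonneg fun _ _ => PrefInstance.newly_nonneg _ _
    have p2 : 0 ≤ ∑ b, ∑ j, PrefInstance.newly (I.labB N' b j) (qB b j) :=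
      Finset.sum_nonneg fun _ _ => Finset.sum_nonneg fun _ _ => PrefInstance.newly_nonneg _ _
    have z1 : ∑ a, ∑ i, PrefInstance.newly (I.labA N' a i) (qA a i) = 0 := by linarith
    have z2 : ∑ b, ∑ j, PrefInstance.newly (I.labB N' b j) (qB b j) = 0 := by linarith
    rw [Finset.sum_eq_zero_iff_of_nonneg
      fun _ _ => Finset.sum_nonneg fun _ _ => PrefInstance.newly_nonneg _ _] at z1 z2
    have hrow : ∀ a, (PrefInstance.rowSet T a).card ≤ (PrefInstance.rowSet N a).card := by
      intro a
      refine (hA a).card_le (hqA a) fun i hi => ?_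
      have z := (Finset.sum_eq_zero_iff_of_nonneg
        fun _ _ => PrefInstance.newly_nonneg _ _).1 (z1 a (Finset.mem_univ a)) i
        (Finset.mem_univ i)
      simpa [PrefInstance.newly, hi] using z
    refine ⟨hrow, ?_, ?_⟩
    · intro b
      refine (hB b).card_le (hqB b) fun j hj => ?_
      have z := (Finset.sum_eq_zero_iff_of_nonneg
        fun _ _ => PrefInstance.newly_nonneg _ _).1 (z2 b (Finset.mem_univ b)) j
        (Finset.mem_univ j)
      simpa [PrefInstance.newly, hj] using z
    · rw [PrefInstance.card_eq_sum_rowSet, PrefInstance.card_eq_sum_rowSet]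
      exact Finset.sum_le_sum fun a _ => hrow a
end

section
/- Let N be a matching in G that admits a 2-level witness. Then for every matching T in G with |T| > |N| we have Δ(N,T) > 0, i.e., N is more popular than T; in particular no matching larger than N is weakly popular, so N is a maximum-size weakly popular matching in G. -/
/-! ### Realizing `δ_u` on the clones of a vertex -/

/-- `p` lists the set `S`, each element exactly once, with nulls in the remaining places. -/
def EnumeratesOnce {ι β : Type*} (p : ι → Option β) (S : Finset β) : Prop :=
  (∀ c d b, p c = some b → p d = some b → c = d) ∧ ∀ b, (∃ c, p c = some b) ↔ b ∈ S

theorem EnumeratesOnce.card_some {ι β : Type*} [Fintype ι] {p : ι → Option β} {S : Finset β}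
    (h : EnumeratesOnce p S) : (Finset.univ.filter fun c => (p c).isSome = true).card = S.card := by
  refine Finset.card_bij (fun c hc => (p c).get (by simpa using hc)) ?_ ?_ ?_
  · intro c hc
    exact (h.2 _).1 ⟨c, by simp⟩
  · intro c hc d hd hcd
    refine h.1 c d ((p c).get (by simpa using hc)) (by simp) ?_
    rw [hcd]; simp
  · intro b hb
    obtain ⟨c, hc⟩ := (h.2 b).2 hb
    exact ⟨c, by simp [hc], by simp [hc]⟩

theorem EnumeratesOnce.card_none {ι β : Type*} [Fintype ι] {p : ι → Option β} {S : Finset β}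
    (h : EnumeratesOnce p S) :
    (Finset.univ.filter fun c => ¬ (p c).isSome = true).card + S.card = Fintype.card ι := by
  rw [← h.card_some, add_comm]
  exact Finset.card_filter_add_card_filter_not _

/-- The `i`-th entry of the padded array of `S₀ ∖ S₁`. -/
noncomputable def arr {β : Type*} [DecidableEq β] (S₀ S₁ : Finset β) (k : ℕ) (i : Fin k) :
    Option β :=
  (padded S₀ S₁ k).getD (i : ℕ) none

theorem arr_eq_some_iff {β : Type*} [DecidableEq β] (S₀ S₁ : Finset β) (k : ℕ) (i : Fin k)
    (b : β) : arr S₀ S₁ k i = some b ↔ (S₀ \ S₁).toList[(i : ℕ)]? = some b := by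
  unfold arr padded
  rw [List.getD_eq_getElem?_getD, List.getElem?_append]
  split_ifs with h
  · simp only [List.length_map] at h
    rw [List.getElem?_map, List.getElem?_eq_getElem h]
    simp
  · simp only [List.length_map, not_lt] at h
    rw [List.getElem?_replicate, List.getElem?_eq_none h]
    split_ifs <;> simp

theorem arr_lists {β : Type*} [DecidableEq β] (S₀ S₁ : Finset β) (k : ℕ)
    (hk : (S₀ \ S₁).card ≤ k) : EnumeratesOnce (arr S₀ S₁ k) (S₀ \ S₁) := by
  refine ⟨?_, ?_⟩
  · intro c d b hc hd
    rw [arr_eq_some_iff] at hc hd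
    have hlt : (c : ℕ) < (S₀ \ S₁).toList.length := by
      by_contra hcon
      rw [List.getElem?_eq_none (by omega)] at hc
      simp at hc
    exact Fin.ext ((List.getElem?_inj hlt (S₀ \ S₁).nodup_toList).1 (hc.trans hd.symm))
  · intro b
    simp only [arr_eq_some_iff]
    rw [← Finset.mem_toList, List.mem_iff_getElem?]
    constructor
    · rintro ⟨c, hc⟩
      exact ⟨c, hc⟩
    · rintro ⟨n, hn⟩
      have hlt : n < (S₀ \ S₁).toList.length := by
        by_contra hcon
        rw [List.getElem?_eq_none (by omega)] at hn
        simp at hn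
      rw [Finset.length_toList] at hlt
      exact ⟨⟨n, by omega⟩, hn⟩

theorem card_sdiff_le_kOf {β : Type*} [DecidableEq β] (S₀ S₁ : Finset β) :
    (S₀ \ S₁).card ≤ kOf S₀ S₁ := by
  have := Finset.card_sdiff_add_card_inter S₀ S₁
  unfold kOf
  omega

theorem kOf_comm {β : Type*} [DecidableEq β] (S₀ S₁ : Finset β) : kOf S₀ S₁ = kOf S₁ S₀ := by
  unfold kOf
  rw [max_comm, Finset.inter_comm]

theorem deltaSet_le {β : Type*} [DecidableEq β] (r : β → ℕ) (S₀ S₁ : Finset β) (k : ℕ)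
    (hk : k = kOf S₀ S₁) (σ : Equiv.Perm (Fin k)) :
    deltaSet r S₀ S₁ ≤ ∑ i, vote r (arr S₀ S₁ k i) (arr S₁ S₀ k (σ i)) := by
  subst hk
  exact Finset.inf'_le _ (Finset.mem_univ σ)

theorem exists_perm_deltaSet {β : Type*} [DecidableEq β] (r : β → ℕ) (S₀ S₁ : Finset β) (k : ℕ)
    (hk : k = kOf S₀ S₁) : ∃ σ : Equiv.Perm (Fin k),
    deltaSet r S₀ S₁ = ∑ i, vote r (arr S₀ S₁ k i) (arr S₁ S₀ k (σ i)) := by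
  subst hk
  obtain ⟨σ, -, hσ⟩ := Finset.exists_mem_eq_inf' (s := Finset.univ) ⟨1, Finset.mem_univ 1⟩
    fun σ : Equiv.Perm (Fin (kOf S₀ S₁)) =>
      ∑ i, vote r (arr S₀ S₁ _ i) (arr S₁ S₀ _ (σ i))
  exact ⟨σ, hσ⟩

theorem vote_self {β : Type*} [DecidableEq β] (r : β → ℕ) (x : Option β) : vote r x x = 0 := by
  cases x <;> simp [vote]

theorem vote_antisymm {β : Type*} [DecidableEq β] {r : β → ℕ} {S : Set β} (hr : Set.InjOn r S)
    {x y : Option β} (hx : ∀ b, x = some b → b ∈ S) (hy : ∀ b, y = some b → b ∈ S) :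
    vote r x y = - vote r y x := by
  rcases x with _ | x <;> rcases y with _ | y
  · simp [vote]
  · simp [vote]
  · simp [vote]
  · have hinj := hr (hx x rfl) (hy y rfl)
    simp only [vote]
    split_ifs <;> grind

/-- Since `δ_u` is a minimum over permutations, exchanging its arguments gives minus a maximum. -/
theorem deltaSet_swap_le {β : Type*} [DecidableEq β] {r : β → ℕ} {S : Set β}
    (hr : Set.InjOn r S) {S₀ S₁ : Finset β} (h₀ : ∀ b ∈ S₀, b ∈ S) (h₁ : ∀ b ∈ S₁, b ∈ S) :
    deltaSet r S₁ S₀ ≤ - deltaSet r S₀ S₁ := by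
  obtain ⟨σ, hσ⟩ := exists_perm_deltaSet r S₀ S₁ _ rfl
  have hmem : ∀ (P Q : Finset β), (∀ b ∈ P, b ∈ S) → kOf P Q = kOf S₀ S₁ → ∀ i b,
      arr P Q (kOf S₀ S₁) i = some b → b ∈ S := by
    intro P Q hP hk i b hb
    have := ((arr_lists P Q _ (hk ▸ card_sdiff_le_kOf P Q)).2 b).1 ⟨i, hb⟩
    exact hP b (Finset.mem_sdiff.1 this).1
  refine (deltaSet_le r S₁ S₀ _ (kOf_comm S₀ S₁) σ⁻¹).trans (le_of_eq ?_)
  rw [hσ, ← Finset.sum_neg_distrib, ← Equiv.sum_comp σ]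
  refine Finset.sum_congr rfl fun i _ => ?_
  rw [show σ⁻¹ (σ i) = i from σ.symm_apply_apply i]
  exact vote_antisymm hr (hmem S₁ S₀ h₁ (kOf_comm _ _) _) (hmem S₀ S₁ h₀ rfl _)

/-- A family with fibers no larger than those of `p` factors injectively through `p`. -/
theorem exists_injective_lift {ι κ γ : Type*} [Fintype ι] [Fintype κ] [DecidableEq γ]
    (L : ι → γ) (p : κ → γ)
    (h : ∀ v, Fintype.card {i // L i = v} ≤ Fintype.card {c // p c = v}) :
    ∃ f : ι → κ, Function.Injective f ∧ ∀ i, p (f i) = L i := by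
  let e : ∀ v, {i // L i = v} ↪ {c // p c = v} := fun v =>
    (Function.Embedding.nonempty_of_card_le (h v)).some
  refine ⟨fun i => (e (L i) ⟨i, rfl⟩ : κ), ?_, fun i => (e (L i) ⟨i, rfl⟩).2⟩
  have key : ∀ v w i j (hi : L i = v) (hj : L j = w),
      (e v ⟨i, hi⟩ : κ) = e w ⟨j, hj⟩ → i = j := by
    intro v w i j hi hj hij
    have hvw : v = w := by
      rw [← (e v ⟨i, hi⟩).2, ← (e w ⟨j, hj⟩).2, hij]
    subst hvw
    exact congrArg Subtype.val ((e v).injective (Subtype.ext hij))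
  exact fun i j hij => key _ _ i j rfl rfl hij

/-- An optimal comparison of `S₀ = N(u)` with `S₁ = T(u)`, realized on the set `κ` of clones of
`u`: if `p` gives the `N'`-partners of the clones, there is an assignment `g` of `T`-partners
that agrees with `p` on common partners and attains `δ_u(S₀, S₁)`. -/
theorem exists_clone_assignment {κ β : Type*} [Fintype κ] [DecidableEq β] (r : β → ℕ)
    {p : κ → Option β} {S₀ S₁ : Finset β} (hp : EnumeratesOnce p S₀) (hcard : S₁.card ≤ Fintype.card κ) :
    ∃ g : κ → Option β, EnumeratesOnce g S₁ ∧ (∀ c b, p c = some b → b ∈ S₁ → g c = some b) ∧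
      deltaSet r S₀ S₁ = ∑ c, vote r (p c) (g c) := by
  classical
  obtain ⟨σ, hσ⟩ := exists_perm_deltaSet r S₀ S₁ _ rfl
  have hL₀ := arr_lists S₀ S₁ _ (card_sdiff_le_kOf S₀ S₁)
  have hL₁ := arr_lists S₁ S₀ (kOf S₀ S₁) (kOf_comm S₀ S₁ ▸ card_sdiff_le_kOf S₁ S₀)
  obtain ⟨f, hf, hpf⟩ := exists_injective_lift (arr S₀ S₁ (kOf S₀ S₁)) p (by
    rintro (_ | b)
    · have h1 := hL₀.card_none
      have h2 := hp.card_none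
      have h3 := Finset.card_sdiff_add_card_inter S₀ S₁
      have h4 := Finset.card_le_card (Finset.inter_subset_left (s₁ := S₀) (s₂ := S₁))
      have h5 := Finset.card_le_card (Finset.inter_subset_right (s₁ := S₀) (s₂ := S₁))
      have h6 : kOf S₀ S₁ = max S₀.card S₁.card - (S₀ ∩ S₁).card := rfl
      rw [Fintype.card_fin] at h1
      simp only [Option.not_isSome_iff_eq_none] at h1 h2
      rw [Fintype.card_subtype, Fintype.card_subtype]
      omega
    · have hle : Fintype.card {i // arr S₀ S₁ (kOf S₀ S₁) i = some b} ≤ 1 :=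
        Fintype.card_le_one_iff.2 fun c d => Subtype.ext (hL₀.1 _ _ b c.2 d.2)
      by_cases hb : b ∈ S₀ \ S₁
      · obtain ⟨c, hc⟩ := (hp.2 b).2 (Finset.mem_sdiff.1 hb).1
        exact hle.trans (Fintype.card_pos_iff.2 ⟨⟨c, hc⟩⟩)
      · have : IsEmpty {i // arr S₀ S₁ (kOf S₀ S₁) i = some b} :=
          ⟨fun c => hb ((hL₀.2 b).1 ⟨c.1, c.2⟩)⟩
        simp)
  -- A clone whose partner leaves is in the range of `f`.
  have hrange : ∀ c b, p c = some b → b ∉ S₁ → ∃ i, f i = c := by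
    intro c b hc hb
    obtain ⟨i, hi⟩ := (hL₀.2 b).2 (Finset.mem_sdiff.2 ⟨(hp.2 b).1 ⟨c, hc⟩, hb⟩)
    exact ⟨i, hp.1 _ _ b ((hpf i).trans hi) hc⟩
  -- A clone in the range of `f` has no common partner.
  have hnot : ∀ i b, p (f i) = some b → b ∉ S₁ := by
    intro i b hb
    rw [hpf] at hb
    exact (Finset.mem_sdiff.1 ((hL₀.2 b).1 ⟨i, hb⟩)).2
  obtain ⟨g, hg⟩ : ∃ g, g = Function.extend f (fun i => arr S₁ S₀ (kOf S₀ S₁) (σ i)) p :=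
    ⟨_, rfl⟩
  have hgf : ∀ i, g (f i) = arr S₁ S₀ (kOf S₀ S₁) (σ i) := fun i => by
    rw [hg, hf.extend_apply]
  have hgn : ∀ c, (¬ ∃ i, f i = c) → g c = p c := fun c hc => by
    rw [hg, Function.extend_apply' _ _ _ hc]
  have hgS : ∀ i b, g (f i) = some b → b ∈ S₁ ∧ b ∉ S₀ := fun i b hb =>
    Finset.mem_sdiff.1 ((hL₁.2 b).1 ⟨σ i, (hgf i).symm.trans hb⟩)
  refine ⟨g, ⟨?_, ?_⟩, ?_, ?_⟩
  · intro c d b hc hd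
    by_cases hcr : ∃ i, f i = c <;> by_cases hdr : ∃ i, f i = d
    · obtain ⟨i, rfl⟩ := hcr
      obtain ⟨j, rfl⟩ := hdr
      rw [hgf] at hc hd
      rw [σ.injective (hL₁.1 _ _ b hc hd)]
    · obtain ⟨i, rfl⟩ := hcr
      rw [hgn d hdr] at hd
      exact absurd ((hp.2 b).1 ⟨d, hd⟩) (hgS i b hc).2
    · obtain ⟨j, rfl⟩ := hdr
      rw [hgn c hcr] at hc
      exact absurd ((hp.2 b).1 ⟨c, hc⟩) (hgS j b hd).2
    · rw [hgn c hcr] at hc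
      rw [hgn d hdr] at hd
      exact hp.1 c d b hc hd
  · intro b
    constructor
    · rintro ⟨c, hc⟩
      by_cases hcr : ∃ i, f i = c
      · obtain ⟨i, rfl⟩ := hcr
        exact (hgS i b hc).1
      · rw [hgn c hcr] at hc
        by_contra hb
        exact hcr (hrange c b hc hb)
    · intro hb
      by_cases hb₀ : b ∈ S₀
      · obtain ⟨c, hc⟩ := (hp.2 b).2 hb₀
        refine ⟨c, (hgn c ?_).trans hc⟩
        rintro ⟨i, rfl⟩
        exact hnot i b hc hb
      · obtain ⟨j, hj⟩ := (hL₁.2 b).2 (Finset.mem_sdiff.2 ⟨hb, hb₀⟩)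
        exact ⟨f (σ.symm j), by rw [hgf, Equiv.apply_symm_apply, hj]⟩
  · intro c b hc hb
    rw [hgn c ?_, hc]
    rintro ⟨i, rfl⟩
    exact hnot i b hc hb
  · rw [hσ]
    refine Fintype.sum_of_injective f hf _ _ ?_ ?_
    · intro c hc
      rw [hgn c hc, vote_self]
    · intro i
      rw [hpf, hgf]

/-! ### The duality bound -/

theorem neg_one_le_vote {β : Type*} [DecidableEq β] (r : β → ℕ) (x y : Option β) :
    -1 ≤ vote r x y := by
  rcases x with _ | x <;> rcases y with _ | y <;> simp only [vote] <;> (try split_ifs) <;> norm_num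

theorem vote_le_one {β : Type*} [DecidableEq β] (r : β → ℕ) (x y : Option β) :
    vote r x y ≤ 1 := by
  rcases x with _ | x <;> rcases y with _ | y <;> simp only [vote] <;> (try split_ifs) <;> norm_num

/-- Weights on vertices that are nonnegative in total on each edge of a one-to-one matching `M`
and on each vertex unmatched in `M` have nonnegative sum. -/
theorem sum_nonneg_of_matching {X Y : Type*} [Fintype X] [Fintype Y] [DecidableEq X]
    [DecidableEq Y] (M : Finset (X × Y)) (h₁ : ∀ e ∈ M, ∀ f ∈ M, e.1 = f.1 → e = f)
    (h₂ : ∀ e ∈ M, ∀ f ∈ M, e.2 = f.2 → e = f) (F : X → ℤ) (G : Y → ℤ)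
    (hF : ∀ x, (∀ y, (x, y) ∉ M) → 0 ≤ F x) (hG : ∀ y, (∀ x, (x, y) ∉ M) → 0 ≤ G y)
    (hFG : ∀ e ∈ M, 0 ≤ F e.1 + G e.2) : 0 ≤ ∑ x, F x + ∑ y, G y := by
  have hX : ∑ e ∈ M, F e.1 ≤ ∑ x, F x := by
    rw [← Finset.sum_image (f := F) (g := Prod.fst) (s := M) fun e he f hf => h₁ e he f hf]
    refine Finset.sum_le_sum_of_subset_of_nonneg (Finset.subset_univ _) fun x _ hx => hF x ?_
    exact fun y hy => hx (Finset.mem_image.2 ⟨_, hy, rfl⟩)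
  have hY : ∑ e ∈ M, G e.2 ≤ ∑ y, G y := by
    rw [← Finset.sum_image (f := G) (g := Prod.snd) (s := M) fun e he f hf => h₂ e he f hf]
    refine Finset.sum_le_sum_of_subset_of_nonneg (Finset.subset_univ _) fun y _ hy => hG y ?_
    exact fun x hx => hy (Finset.mem_image.2 ⟨_, hx, rfl⟩)
  have := Finset.sum_nonneg hFG
  rw [Finset.sum_add_distrib] at this
  omega

namespace PrefInstance

section

variable {α β : Type*} [Fintype α] [Fintype β] [DecidableEq α] [DecidableEq β]

theorem sum_card_rowSet (M : Finset (α × β)) : ∑ a, (rowSet M a).card = M.card := by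
  rw [Finset.card_eq_sum_card_fiberwise (f := Prod.fst) (t := Finset.univ) (fun _ _ => by simp)]
  refine Finset.sum_congr rfl fun a _ => ?_
  refine Finset.card_bij (fun b _ => (a, b)) ?_ ?_ ?_
  · intro b hb
    simpa [rowSet] using hb
  · intro b _ c _ h
    exact (Prod.ext_iff.1 h).2
  · rintro ⟨a', b⟩ h
    obtain ⟨h, rfl⟩ := Finset.mem_filter.1 h
    exact ⟨b, by simpa [rowSet] using h, rfl⟩

variable (I : PrefInstance α β)

theorem partnerA_eq_some {N' : Finset (I.CloneA × I.CloneB)}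
    (h : ∀ e ∈ N', ∀ f ∈ N', e.1 = f.1 → e = f) (x : I.CloneA) (y : I.CloneB) :
    I.partnerA N' x = some y ↔ (x, y) ∈ N' := by
  unfold partnerA
  split_ifs with hx
  · rw [Option.some_inj]
    refine ⟨fun hy => hy ▸ hx.choose_spec, fun hy => ?_⟩
    exact (Prod.ext_iff.1 (h _ hx.choose_spec _ hy rfl)).2
  · simpa using fun hy => hx ⟨y, hy⟩

theorem partnerB_eq_some {N' : Finset (I.CloneA × I.CloneB)}
    (h : ∀ e ∈ N', ∀ f ∈ N', e.2 = f.2 → e = f) (x : I.CloneA) (y : I.CloneB) :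
    I.partnerB N' y = some x ↔ (x, y) ∈ N' := by
  unfold partnerB
  split_ifs with hy
  · rw [Option.some_inj]
    refine ⟨fun hx => hx ▸ hy.choose_spec, fun hx => ?_⟩
    exact (Prod.ext_iff.1 (h _ hy.choose_spec _ hx rfl)).1
  · simpa using fun hx => hy ⟨x, hx⟩

/-- The vertex of `B` whose clone is the `N'`-partner of the clone `x`, or null. -/
noncomputable def mateA (N' : Finset (I.CloneA × I.CloneB)) (x : I.CloneA) : Option β :=
  Option.map Sigma.fst (I.partnerA N' x)

/-- The vertex of `A` whose clone is the `N'`-partner of the clone `y`, or null. -/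
noncomputable def mateB (N' : Finset (I.CloneA × I.CloneB)) (y : I.CloneB) : Option α :=
  Option.map Sigma.fst (I.partnerB N' y)

variable {I} {N : Finset (α × β)} {N' : Finset (I.CloneA × I.CloneB)}

theorem IsRealization.mateA_eq_some (hN' : I.IsRealization N N') (x : I.CloneA) (b : β) :
    I.mateA N' x = some b ↔ ∃ y : I.CloneB, (x, y) ∈ N' ∧ y.1 = b := by
  simp only [mateA, Option.map_eq_some_iff, I.partnerA_eq_some hN'.1]

theorem IsRealization.mateB_eq_some (hN' : I.IsRealization N N') (y : I.CloneB) (a : α) :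
    I.mateB N' y = some a ↔ ∃ x : I.CloneA, (x, y) ∈ N' ∧ x.1 = a := by
  simp only [mateB, Option.map_eq_some_iff, I.partnerB_eq_some hN'.2.1]

theorem IsRealization.mateA_eq_none (hN' : I.IsRealization N N') (x : I.CloneA) :
    I.mateA N' x = none ↔ ∀ y, (x, y) ∉ N' := by
  rw [Option.eq_none_iff_forall_ne_some]
  constructor
  · exact fun h y hy => h y.1 ((hN'.mateA_eq_some x y.1).2 ⟨y, hy, rfl⟩)
  · intro h b hb
    obtain ⟨y, hy, -⟩ := (hN'.mateA_eq_some x b).1 hb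
    exact h y hy

theorem IsRealization.mateB_eq_none (hN' : I.IsRealization N N') (y : I.CloneB) :
    I.mateB N' y = none ↔ ∀ x, (x, y) ∉ N' := by
  rw [Option.eq_none_iff_forall_ne_some]
  constructor
  · exact fun h x hx => h x.1 ((hN'.mateB_eq_some y x.1).2 ⟨x, hx, rfl⟩)
  · intro h a ha
    obtain ⟨x, hx, -⟩ := (hN'.mateB_eq_some y a).1 ha
    exact h x hx

theorem IsRealization.proj_injOn (hN' : I.IsRealization N N') {x x' : I.CloneA} {y y' : I.CloneB}
    (h : (x, y) ∈ N') (h' : (x', y') ∈ N') (hx : x.1 = x'.1) (hy : y.1 = y'.1) :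
    x = x' ∧ y = y' := by
  have hinj := Finset.card_image_iff.1
    ((congrArg Finset.card hN'.2.2.1).trans hN'.2.2.2.symm)
  exact Prod.ext_iff.1 (hinj h h' (Prod.ext hx hy))

theorem IsRealization.mem_iff (hN' : I.IsRealization N N') (a : α) (b : β) :
    (a, b) ∈ N ↔ ∃ x y, (x, y) ∈ N' ∧ x.1 = a ∧ y.1 = b := by
  conv_lhs => rw [← hN'.2.2.1]
  simp only [Finset.mem_image, Prod.exists, Prod.mk.injEq]

theorem IsRealization.lists_mateA (hN' : I.IsRealization N N') (a : α) :
    EnumeratesOnce (fun i => I.mateA N' ⟨a, i⟩) (rowSet N a) := by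
  refine ⟨?_, ?_⟩
  · intro c d b hc hd
    obtain ⟨y, hy, hyb⟩ := (hN'.mateA_eq_some _ _).1 hc
    obtain ⟨z, hz, hzb⟩ := (hN'.mateA_eq_some _ _).1 hd
    have := (hN'.proj_injOn hy hz rfl (hyb.trans hzb.symm)).1
    simpa using this
  · intro b
    simp only [rowSet, Finset.mem_filter, Finset.mem_univ, true_and, hN'.mem_iff,
      hN'.mateA_eq_some]
    constructor
    · rintro ⟨c, y, hy, hyb⟩
      exact ⟨_, y, hy, rfl, hyb⟩
    · rintro ⟨⟨_, c⟩, y, hy, rfl, hyb⟩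
      exact ⟨c, y, hy, hyb⟩

theorem IsRealization.lists_mateB (hN' : I.IsRealization N N') (b : β) :
    EnumeratesOnce (fun j => I.mateB N' ⟨b, j⟩) (colSet N b) := by
  refine ⟨?_, ?_⟩
  · intro c d a hc hd
    obtain ⟨x, hx, hxa⟩ := (hN'.mateB_eq_some _ _).1 hc
    obtain ⟨z, hz, hza⟩ := (hN'.mateB_eq_some _ _).1 hd
    have := (hN'.proj_injOn hx hz (hxa.trans hza.symm) rfl).2
    simpa using this
  · intro a
    simp only [colSet, Finset.mem_filter, Finset.mem_univ, true_and, hN'.mem_iff,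
      hN'.mateB_eq_some]
    constructor
    · rintro ⟨c, x, hx, hxa⟩
      exact ⟨x, _, hx, hxa, rfl⟩
    · rintro ⟨x, ⟨_, c⟩, hx, hxa, rfl⟩
      exact ⟨c, x, hx, hxa⟩

/-- The dual value of a clone in `A'`: `0` if it is unmatched in `N'`, otherwise `1` on level 0 and
`-1` on level 1. -/
noncomputable def dualA (N' : Finset (I.CloneA × I.CloneB)) (lA : I.CloneA → Bool)
    (x : I.CloneA) : ℤ :=
  if I.mateA N' x = none then 0 else if lA x = true then -1 else 1

/-- The dual value of a clone in `B'`: `0` if it is unmatched in `N'`, otherwise `-1` on level 0 and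
`1` on level 1. -/
noncomputable def dualB (N' : Finset (I.CloneA × I.CloneB)) (lB : I.CloneB → Bool)
    (y : I.CloneB) : ℤ :=
  if I.mateB N' y = none then 0 else if lB y = true then 1 else -1

variable {lA : I.CloneA → Bool} {lB : I.CloneB → Bool}

/-- The dual values cancel along the edges of `N'`. -/
theorem sum_dual_le (hN' : I.IsRealization N N') (hW : I.TwoLevelWitness N N' lA lB) :
    ∑ x, dualA N' lA x + ∑ y, dualB N' lB y ≤ 0 := by
  have := sum_nonneg_of_matching N' hN'.1 hN'.2.1 (fun x => - dualA N' lA x)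
    (fun y => - dualB N' lB y) ?_ ?_ ?_
  · simp only [Finset.sum_neg_distrib] at this
    omega
  · intro x hx
    simp [dualA, (hN'.mateA_eq_none x).2 hx]
  · intro y hy
    simp [dualB, (hN'.mateB_eq_none y).2 hy]
  · rintro ⟨x, y⟩ h
    have hx : I.mateA N' x ≠ none := fun hx => (hN'.mateA_eq_none x).1 hx y h
    have hy : I.mateB N' y ≠ none := fun hy => (hN'.mateB_eq_none y).1 hy x h
    have hl : lA x = lB y := hW.2.2.1 _ h
    simp only [dualA, dualB, hx, hy, hl, if_false]
    split_ifs <;> norm_num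

/-- The dual values cover every edge of `G'_N`, with slack one if the `A'`-endpoint is unmatched
in `N'`. -/
theorem edge_covered (hN' : I.IsRealization N N') (hW : I.TwoLevelWitness N N' lA lB)
    {x : I.CloneA} {y : I.CloneB} (h : I.GNEdge N N' x y) :
    I.wtE N' x y + (if I.mateA N' x = none then 1 else 0) ≤ dualA N' lA x + dualB N' lB y := by
  obtain ⟨hA, hB, -, h2, h0⟩ := hW
  have hA := hA x
  have hB := hB y
  have h2 := h2 x y h
  have h0 := h0 x y h
  rw [← hN'.mateA_eq_none] at hA
  rw [← hN'.mateB_eq_none] at hB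
  have e : I.wtE N' x y = vote (I.rankA x.1) (some y.1) (I.mateA N' x) +
    vote (I.rankB y.1) (some x.1) (I.mateB N' y) := rfl
  have v1 := neg_one_le_vote (I.rankA x.1) (some y.1) (I.mateA N' x)
  have v2 := neg_one_le_vote (I.rankB y.1) (some x.1) (I.mateB N' y)
  have v3 := vote_le_one (I.rankA x.1) (some y.1) (I.mateA N' x)
  have v4 := vote_le_one (I.rankB y.1) (some x.1) (I.mateB N' y)
  have v5 : I.mateA N' x = none → vote (I.rankA x.1) (some y.1) (I.mateA N' x) = 1 :=
    fun hx => by rw [hx]; rfl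
  have v6 : I.mateB N' y = none → vote (I.rankB y.1) (some x.1) (I.mateB N' y) = 1 :=
    fun hy => by rw [hy]; rfl
  rw [e] at h0 h2 ⊢
  unfold dualA dualB
  generalize vote (I.rankA x.1) (some y.1) (I.mateA N' x) = vA at *
  generalize vote (I.rankB y.1) (some x.1) (I.mateB N' y) = vB at *
  generalize lA x = l at *
  generalize lB y = m at *
  clear e
  by_cases hx : I.mateA N' x = none <;> by_cases hy : I.mateB N' y = none <;>
    simp only [hx, hy, if_true, if_false, forall_const, false_imp_iff] at * <;>
    cases l <;> cases m <;> simp at * <;> omega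

/-- Both bounds come from the number of clones in `A'` that are matched under `T` but unmatched in
`N'`: it is a lower bound for `Δ(N,T)`. -/
theorem delta_lower_bound (hN : I.IsMatching N) (hN' : I.IsRealization N N')
    (hW : I.TwoLevelWitness N N' lA lB) {T : Finset (α × β)} (hT : I.IsMatching T) :
    0 ≤ I.Delta N T ∧ (T.card : ℤ) - N.card ≤ I.Delta N T := by
  classical
  choose gA hgA hgAN hgAΔ using fun a => exists_clone_assignment (I.rankA a)
    (S₁ := rowSet T a) (hN'.lists_mateA a)
    (by simpa using hT.2.1 a)
  choose gB hgB hgBN hgBΔ using fun b => exists_clone_assignment (I.rankB b)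
    (S₁ := colSet T b) (hN'.lists_mateB b)
    (by simpa using hT.2.2 b)
  -- The clones in `A'` that are matched under `T` but not under `N`.
  obtain ⟨u, hu⟩ : ∃ u : I.CloneA → ℤ, u = fun x =>
    if (gA x.1 x.2).isSome = true ∧ I.mateA N' x = none then 1 else 0 := ⟨_, rfl⟩
  have hTE : ∀ {x : I.CloneA} {b : β}, gA x.1 x.2 = some b → (x.1, b) ∈ T := by
    intro x b h
    simpa [rowSet] using ((hgA x.1).2 b).1 ⟨_, h⟩
  have hTE' : ∀ {y : I.CloneB} {a : α}, gB y.1 y.2 = some a → (a, y.1) ∈ T := by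
    intro y a h
    simpa [colSet] using ((hgB y.1).2 a).1 ⟨_, h⟩
  have hNA : ∀ {x : I.CloneA} {b : β}, I.mateA N' x = some b → (x.1, b) ∈ N := by
    intro x b h
    simpa [rowSet] using ((hN'.lists_mateA x.1).2 b).1 ⟨x.2, h⟩
  have hNB : ∀ {y : I.CloneB} {a : α}, I.mateB N' y = some a → (a, y.1) ∈ N := by
    intro y a h
    simpa [colSet] using ((hN'.lists_mateB y.1).2 a).1 ⟨y.2, h⟩
  have hΔ : I.Delta N T =
      ∑ x : I.CloneA, vote (I.rankA x.1) (I.mateA N' x) (gA x.1 x.2) +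
      ∑ y : I.CloneB, vote (I.rankB y.1) (I.mateB N' y) (gB y.1 y.2) := by
    rw [Fintype.sum_sigma, Fintype.sum_sigma]
    exact congrArg₂ _ (Finset.sum_congr rfl fun a _ => hgAΔ a)
      (Finset.sum_congr rfl fun b _ => hgBΔ b)
  have hmain := sum_nonneg_of_matching
    (Finset.univ.filter fun e : I.CloneA × I.CloneB =>
      gA e.1.1 e.1.2 = some e.2.1 ∧ gB e.2.1 e.2.2 = some e.1.1) ?_ ?_
    (fun x => vote (I.rankA x.1) (I.mateA N' x) (gA x.1 x.2) + dualA N' lA x - u x)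
    (fun y => vote (I.rankB y.1) (I.mateB N' y) (gB y.1 y.2) + dualB N' lB y) ?_ ?_ ?_
  · simp only [Finset.sum_add_distrib, Finset.sum_sub_distrib] at hmain
    have hdual := sum_dual_le hN' hW
    have hu0 : 0 ≤ ∑ x, u x := Finset.sum_nonneg fun x _ => by
      rw [hu]; dsimp only; split_ifs <;> norm_num
    have hcount : ∀ (M : Finset (α × β)) (p : I.CloneA → Option β),
        (∀ a, EnumeratesOnce (fun i => p ⟨a, i⟩) (rowSet M a)) →
        ∑ x, (if (p x).isSome = true then (1 : ℤ) else 0) = M.card := by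
      intro M p hp
      rw [← sum_card_rowSet, Fintype.sum_sigma]
      push_cast
      refine Finset.sum_congr rfl fun a _ => ?_
      rw [← (hp a).card_some]
      simp
    have hcT := hcount T (fun x => gA x.1 x.2) hgA
    have hcN := hcount N (I.mateA N') hN'.lists_mateA
    have hu1 : (T.card : ℤ) - N.card ≤ ∑ x, u x := by
      rw [← hcT, ← hcN, ← Finset.sum_sub_distrib]
      refine Finset.sum_le_sum fun x _ => ?_
      rw [hu]
      cases h : I.mateA N' x <;> cases h' : gA x.1 x.2 <;> simp [h, h']
    constructor <;> omega
  · rintro ⟨x, ⟨b, j⟩⟩ he ⟨x', ⟨b', j'⟩⟩ hf (rfl : x = x')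
    simp only [Finset.mem_filter, Finset.mem_univ, true_and] at he hf
    obtain rfl : b = b' := Option.some_inj.1 (he.1.symm.trans hf.1)
    rw [(hgB b).1 j j' _ he.2 hf.2]
  · rintro ⟨⟨a, i⟩, y⟩ he ⟨⟨a', i'⟩, y'⟩ hf (rfl : y = y')
    simp only [Finset.mem_filter, Finset.mem_univ, true_and] at he hf
    obtain rfl : a = a' := Option.some_inj.1 (he.2.symm.trans hf.2)
    rw [(hgA a).1 i i' _ he.1 hf.1]
  · intro x hx
    have hg : gA x.1 x.2 = none := by
      rw [Option.eq_none_iff_forall_ne_some]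
      intro b hb
      obtain ⟨j, hj⟩ := ((hgB b).2 x.1).2 (by simpa [colSet] using hTE hb)
      exact hx ⟨b, j⟩ (by simpa using ⟨hb, hj⟩)
    rw [hu]
    cases h : I.mateA N' x <;> simp only [hg, h, dualA, vote] <;> simp
    split_ifs <;> norm_num
  · intro y hy
    have hg : gB y.1 y.2 = none := by
      rw [Option.eq_none_iff_forall_ne_some]
      intro a ha
      obtain ⟨i, hi⟩ := ((hgA a).2 y.1).2 (by simpa [rowSet] using hTE' ha)
      exact hy ⟨a, i⟩ (by simpa using ⟨hi, ha⟩)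
    cases h : I.mateB N' y <;> simp only [hg, h, dualB, vote] <;> simp
    split_ifs <;> norm_num
  · rintro ⟨x, y⟩ he
    simp only [Finset.mem_filter, Finset.mem_univ, true_and] at he
    have hxyT : (x.1, y.1) ∈ T := hTE he.1
    have hE := hT.1 hxyT
    have hedge : I.GNEdge N N' x y := by
      -- An edge of `N ∩ T` keeps its clones, so in the first case `(x, y)` is its copy in `N'`.
      by_cases hxyN : (x.1, y.1) ∈ N
      · obtain ⟨x', y', h', hx, hy⟩ := (hN'.mem_iff _ _).1 hxyN
        obtain ⟨a, i⟩ := x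
        obtain ⟨b, j⟩ := y
        obtain ⟨a', i'⟩ := x'
        obtain ⟨b', j'⟩ := y'
        dsimp only at hx hy hxyT he
        subst hx hy
        have hi := hgAN a' i' b' ((hN'.mateA_eq_some _ _).2 ⟨_, h', rfl⟩)
          (by simpa [rowSet] using hxyT)
        have hj := hgBN b' j' a' ((hN'.mateB_eq_some _ _).2 ⟨_, h', rfl⟩)
          (by simpa [colSet] using hxyT)
        rw [(hgA a').1 i i' _ he.1 hi, (hgB b').1 j j' _ he.2 hj]
        exact Or.inr h'
      · exact Or.inl ⟨hE, hxyN⟩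
    have hcov := edge_covered hN' hW hedge
    have e : I.wtE N' x y = vote (I.rankA x.1) (some y.1) (I.mateA N' x) +
      vote (I.rankB y.1) (some x.1) (I.mateB N' y) := rfl
    have a1 := vote_antisymm (I.rankA_injOn x.1) (x := some y.1) (y := I.mateA N' x)
      (fun b hb => by cases hb; exact hE) (fun b hb => hN.1 (hNA hb))
    have a2 := vote_antisymm (I.rankB_injOn y.1) (x := some x.1) (y := I.mateB N' y)
      (fun b hb => by cases hb; exact hE) (fun b hb => hN.1 (hNB hb))
    have hux : u x = if I.mateA N' x = none then 1 else 0 := by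
      rw [hu]; simp [he.1]
    dsimp only
    rw [he.1, he.2, hux]
    omega

theorem Delta_swap_le {M T : Finset (α × β)} (hM : I.IsMatching M) (hT : I.IsMatching T) :
    I.Delta T M ≤ - I.Delta M T := by
  have h1 : ∑ a, I.DeltaA T M a ≤ ∑ a, - I.DeltaA M T a := Finset.sum_le_sum fun a _ =>
    deltaSet_swap_le (I.rankA_injOn a) (fun b hb => hM.1 (by simpa [rowSet] using hb))
      (fun b hb => hT.1 (by simpa [rowSet] using hb))
  have h2 : ∑ b, I.DeltaB T M b ≤ ∑ b, - I.DeltaB M T b := Finset.sum_le_sum fun b _ =>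
    deltaSet_swap_le (I.rankB_injOn b) (fun a ha => hM.1 (by simpa [colSet] using ha))
      (fun a ha => hT.1 (by simpa [colSet] using ha))
  rw [Finset.sum_neg_distrib] at h1 h2
  unfold Delta
  omega

end

end PrefInstance

/-- Let `N` be a matching in `G` (with realization `N'`) that admits a
2-level witness. Then `Δ(N,T) > 0` for every matching `T` with `|T| > |N|`, i.e. `N` is
more popular than every larger matching; in particular no matching larger than `N` is
weakly popular, so `N` is a maximum-size weakly popular matching in `G`. -/
theorem statement9 {α β : Type*} [Fintype α] [Fintype β] [DecidableEq α] [DecidableEq β]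
    (I : PrefInstance α β) (N : Finset (α × β)) (hN : I.IsMatching N)
    (N' : Finset (I.CloneA × I.CloneB)) (hN' : I.IsRealization N N')
    (lA : I.CloneA → Bool) (lB : I.CloneB → Bool)
    (hW : I.TwoLevelWitness N N' lA lB) :
    (∀ T : Finset (α × β), I.IsMatching T → N.card < T.card → 0 < I.Delta N T) ∧
    I.WeaklyPopular N ∧
    (∀ T : Finset (α × β), I.WeaklyPopular T → T.card ≤ N.card) := by
  refine ⟨fun T hT hlt => ?_, ⟨hN, fun T hT => ?_⟩, fun T hT => ?_⟩
  · have := (PrefInstance.delta_lower_bound hN hN' hW hT).2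
    omega
  · have h1 := (PrefInstance.delta_lower_bound hN hN' hW hT).1
    have h2 := PrefInstance.Delta_swap_le hN hT
    omega
  · have h1 := (PrefInstance.delta_lower_bound hN hN' hW hT.1).2
    have h2 := hT.2 N hN
    omega
end
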